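/- arXiv:1709.09709 — 2 statements merged into one kernel-verified Lean document; each statement's English description precedes it below -/
import Mathlib

section
/- Let p > 1 and define f : [0, +∞) → ℝ by f(t) = t^(p-1)·ln(1 + t), and F(t) = ∫₀^t f(τ) dτ. Then for every θ > p there exists t > 0 such that θ·F(t) > t·f(t). -/
open Real

/-!
An Ambrosetti–Rabinowitz inequality `θ F ≤ t F'` says that `t ^ (-θ) * F t` is nondecreasing, so it
forces `F` to grow at least like `t ^ θ`, and then `f = F'` at least like `t ^ (θ - 1)`. The
logarithm is too weak for this: `t ^ (p - 1) * log (1 + t) = o(t ^ (θ - 1))` for every `θ > p`.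
-/

open Filter Set Asymptotics MeasureTheory
open scoped Topology

/-- The Ambrosetti–Rabinowitz condition with exponent `θ` for a nonlinearity `f` with primitive `F`.
It is imposed only for large `t`, so that its failure excludes the condition on any half-line. -/
def AmbrosettiRabinowitz (θ : ℝ) (f F : ℝ → ℝ) : Prop :=
  ∀ᶠ t in atTop, 0 < θ * F t ∧ θ * F t ≤ t * f t

theorem monotoneOn_rpow_neg_mul_of_mul_le_mul_deriv {f F : ℝ → ℝ} {a θ : ℝ} (ha : 0 < a)
    (hderiv : ∀ t ∈ Ici a, HasDerivAt F (f t) t) (hle : ∀ t ∈ Ici a, θ * F t ≤ t * f t) :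
    MonotoneOn (fun t ↦ t ^ (-θ) * F t) (Ici a) := by
  have hderiv_mul : ∀ t ∈ Ici a,
      HasDerivAt (fun t ↦ t ^ (-θ) * F t) (t ^ (-θ - 1) * (t * f t - θ * F t)) t := by
    intro t hat
    have ht : 0 < t := ha.trans_le hat
    have hpow : t ^ (-θ) = t ^ (-θ - 1) * t := by
      rw [← rpow_add_one ht.ne', sub_add_cancel]
    refine ((hasDerivAt_rpow_const (Or.inl ht.ne')).mul (hderiv t hat)).congr_deriv ?_
    rw [hpow]
    ring
  refine monotoneOn_of_hasDerivWithinAt_nonneg (convex_Ici a)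
    (fun t ht ↦ (hderiv_mul t ht).continuousAt.continuousWithinAt)
    (fun t ht ↦ (hderiv_mul t (interior_subset ht)).hasDerivWithinAt) fun t ht ↦ ?_
  have hat : t ∈ Ici a := interior_subset ht
  exact mul_nonneg (rpow_nonneg (ha.le.trans hat) _) (sub_nonneg.2 (hle t hat))

namespace AmbrosettiRabinowitz

variable {f F : ℝ → ℝ} {θ : ℝ}

theorem rpow_isBigO_primitive (hAR : AmbrosettiRabinowitz θ f F) (hθ : 0 < θ)
    (hderiv : ∀ᶠ t in atTop, HasDerivAt F (f t) t) :
    (fun t ↦ t ^ θ) =O[atTop] F := by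
  obtain ⟨a, ha⟩ := eventually_atTop.1 (hAR.and (hderiv.and (eventually_gt_atTop 0)))
  have ha_pos : 0 < a := (ha a le_rfl).2.2
  have hmono := monotoneOn_rpow_neg_mul_of_mul_le_mul_deriv ha_pos
    (fun t ht ↦ (ha t ht).2.1) (fun t ht ↦ (ha t ht).1.2)
  set c := a ^ (-θ) * F a
  have hc : 0 < c :=
    mul_pos (rpow_pos_of_pos ha_pos _) (pos_of_mul_pos_right (ha a le_rfl).1.1 hθ.le)
  refine IsBigO.of_bound c⁻¹ ((eventually_ge_atTop a).mono fun t hat ↦ ?_)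
  have ht : 0 < t := ha_pos.trans_le hat
  have hgrowth : c * t ^ θ ≤ F t := by
    calc c * t ^ θ ≤ t ^ (-θ) * F t * t ^ θ := by
          gcongr
          exact hmono self_mem_Ici hat hat
      _ = F t := by
          rw [rpow_neg ht.le]
          field_simp
  calc ‖t ^ θ‖ = t ^ θ := norm_of_nonneg (rpow_nonneg ht.le θ)
    _ ≤ c⁻¹ * F t := (le_inv_mul_iff₀ hc).2 hgrowth
    _ ≤ c⁻¹ * ‖F t‖ := by gcongr; exact le_norm_self _

theorem rpow_sub_one_isBigO (hAR : AmbrosettiRabinowitz θ f F) (hθ : 0 < θ)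
    (hderiv : ∀ᶠ t in atTop, HasDerivAt F (f t) t) :
    (fun t ↦ t ^ (θ - 1)) =O[atTop] f := by
  have hprimitive : F =O[atTop] fun t ↦ t * f t := by
    refine IsBigO.of_bound θ⁻¹ (hAR.mono fun t ⟨hpos, hle⟩ ↦ ?_)
    rw [le_inv_mul_iff₀ hθ, ← norm_of_nonneg hθ.le, ← norm_mul, norm_of_nonneg hpos.le]
    exact hle.trans (le_norm_self _)
  refine ((isBigO_refl (fun t : ℝ ↦ t⁻¹) atTop).mul
    ((hAR.rpow_isBigO_primitive hθ hderiv).trans hprimitive)).congr' ?_ ?_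
  · filter_upwards [eventually_gt_atTop 0] with t ht
    rw [rpow_sub_one ht.ne', div_eq_inv_mul]
  · filter_upwards [eventually_gt_atTop 0] with t ht
    exact inv_mul_cancel_left₀ ht.ne' _

theorem not_of_isLittleO (hθ : 0 < θ) (hderiv : ∀ᶠ t in atTop, HasDerivAt F (f t) t)
    (hf : f =o[atTop] fun t ↦ t ^ (θ - 1)) : ¬AmbrosettiRabinowitz θ f F := by
  intro hAR
  have hpow : ∀ᶠ t : ℝ in atTop, t ^ (θ - 1) ≠ 0 :=
    (eventually_gt_atTop 0).mono fun t ht ↦ (rpow_pos_of_pos ht _).ne'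
  exact isLittleO_irrefl hpow.frequently
    ((hAR.rpow_sub_one_isBigO hθ hderiv).trans_isLittleO hf)

end AmbrosettiRabinowitz

/-- The restriction to `t ≥ 0` of the model nonlinearity `|t| ^ (p - 2) * t * log (1 + |t|)`;
its values at `t < 0` are irrelevant. -/
noncomputable def modelNonlinearity (p t : ℝ) : ℝ :=
  t ^ (p - 1) * log (1 + t)

namespace modelNonlinearity

variable {p t : ℝ}

theorem pos (p : ℝ) (ht : 0 < t) : 0 < modelNonlinearity p t :=
  mul_pos (rpow_pos_of_pos ht _) (log_pos (by linarith))

theorem le_rpow (p : ℝ) (ht : 0 < t) : modelNonlinearity p t ≤ t ^ p := by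
  calc t ^ (p - 1) * log (1 + t) ≤ t ^ (p - 1) * t := by
        gcongr
        linarith [log_le_sub_one_of_pos (show 0 < 1 + t by linarith)]
    _ = t ^ p := by rw [← rpow_add_one ht.ne', sub_add_cancel]

theorem measurable (p : ℝ) : Measurable (modelNonlinearity p) := by
  unfold modelNonlinearity
  fun_prop

theorem continuousAt (p : ℝ) (ht : 0 < t) : ContinuousAt (modelNonlinearity p) t :=
  (continuousAt_rpow_const t _ (Or.inl ht.ne')).mul
    ((continuousAt_const.add continuousAt_id).log (add_pos one_pos ht).ne')

theorem intervalIntegrable (hp : -1 < p) (ht : 0 ≤ t) :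
    IntervalIntegrable (modelNonlinearity p) volume 0 t := by
  refine (intervalIntegral.intervalIntegrable_rpow' hp).mono_fun'
    (measurable p).aestronglyMeasurable (ae_restrict_of_forall_mem measurableSet_uIoc ?_)
  intro τ hτ
  have hτ_pos : 0 < τ := (uIoc_of_le ht ▸ hτ).1
  exact (norm_of_nonneg (pos p hτ_pos).le).trans_le (le_rpow p hτ_pos)

theorem integral_pos (hp : -1 < p) (ht : 0 < t) : 0 < ∫ τ in (0 : ℝ)..t, modelNonlinearity p τ :=
  intervalIntegral.intervalIntegral_pos_of_pos_on (intervalIntegrable hp ht.le)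
    (fun _ hτ ↦ pos p hτ.1) ht

theorem hasDerivAt_integral (hp : -1 < p) (ht : 0 < t) :
    HasDerivAt (fun s ↦ ∫ τ in (0 : ℝ)..s, modelNonlinearity p τ) (modelNonlinearity p t) t :=
  intervalIntegral.integral_hasDerivAt_right (intervalIntegrable hp ht.le)
    (measurable p).stronglyMeasurable.stronglyMeasurableAtFilter (continuousAt p ht)

end modelNonlinearity

theorem isLittleO_log_one_add_rpow_atTop {r : ℝ} (hr : 0 < r) :
    (fun t ↦ log (1 + t)) =o[atTop] fun t ↦ t ^ r := by
  have hshift : (fun t : ℝ ↦ 1 + t) =O[atTop] fun t ↦ t :=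
    (isLittleO_const_id_atTop (1 : ℝ)).isBigO.add (isBigO_refl _ _)
  exact ((isLittleO_log_rpow_atTop hr).comp_tendsto
    (tendsto_atTop_add_const_left _ 1 tendsto_id)).trans_isBigO
      (hshift.rpow hr.le (eventually_ge_atTop 0))

theorem modelNonlinearity.isLittleO_rpow {p θ : ℝ} (hθ : p < θ) :
    modelNonlinearity p =o[atTop] fun t ↦ t ^ (θ - 1) := by
  refine ((isBigO_refl (fun t : ℝ ↦ t ^ (p - 1)) atTop).mul_isLittleO
    (isLittleO_log_one_add_rpow_atTop (sub_pos.2 hθ))).congr' EventuallyEq.rfl ?_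
  filter_upwards [eventually_gt_atTop 0] with t ht
  rw [← rpow_add ht]
  ring_nf

theorem modelNonlinearity.not_ambrosettiRabinowitz {p θ : ℝ} (hp : -1 < p) (hθ_pos : 0 < θ)
    (hθ : p < θ) :
    ¬AmbrosettiRabinowitz θ (modelNonlinearity p)
      (fun t ↦ ∫ τ in (0 : ℝ)..t, modelNonlinearity p τ) :=
  AmbrosettiRabinowitz.not_of_isLittleO hθ_pos
    ((eventually_gt_atTop 0).mono fun _ ht ↦ hasDerivAt_integral hp ht) (isLittleO_rpow hθ)

theorem model_nonlinearity_fails_AR_general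
    (p : ℝ) (hp : -1 < p)
    (f : ℝ → ℝ) (hf : ∀ t : ℝ, 0 ≤ t → f t = t ^ (p - 1) * Real.log (1 + t))
    (F : ℝ → ℝ) (hF : ∀ t, F t = ∫ τ in (0 : ℝ)..t, f τ) :
    ∀ θ : ℝ, 0 < θ → p < θ → ∃ᶠ t in atTop, θ * F t > t * f t := by
  intro θ hθ_pos hθ hle
  refine modelNonlinearity.not_ambrosettiRabinowitz hp hθ_pos hθ ?_
  filter_upwards [hle, eventually_gt_atTop 0] with t hle_t ht
  have hF_model : F t = ∫ τ in (0 : ℝ)..t, modelNonlinearity p τ :=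
    (hF t).trans (intervalIntegral.integral_congr fun τ hτ ↦ hf τ (uIcc_of_le ht.le ▸ hτ).1)
  have hf_model : f t = modelNonlinearity p t := hf t ht.le
  rw [hF_model, hf_model] at hle_t
  exact ⟨mul_pos hθ_pos (modelNonlinearity.integral_pos hp ht), not_lt.1 hle_t⟩

theorem model_nonlinearity_fails_AR
    (p : ℝ) (hp : 1 < p)
    (f : ℝ → ℝ) (hf : ∀ t : ℝ, 0 ≤ t → f t = t ^ (p - 1) * Real.log (1 + t))
    (F : ℝ → ℝ) (hF : ∀ t, F t = ∫ τ in (0 : ℝ)..t, f τ) :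
    ∀ θ : ℝ, p < θ → ∃ t : ℝ, 0 < t ∧ θ * F t > t * f t := fun θ hθ ↦
  ((eventually_gt_atTop 0).and_frequently (model_nonlinearity_fails_AR_general p (by linarith)
    f hf F hF θ (by linarith) hθ)).exists
end

section
/- Let N ≥ 1, p, q > 1 and α, β > 0 with α/p + β/q = 1. Let λ, λ₀ : ℝ^N → ℝ be bounded measurable functions such that λ(x) − λ₀(x) → 0 as |x| → +∞. Let (u_n), (v_n) be sequences of measurable functions ℝ^N → ℝ such that sup_n ∫_{ℝ^N} |u_n|^p dx < +∞, sup_n ∫_{ℝ^N} |v_n|^q dx < +∞, and, for every R > 0, ∫_{B_R(0)} |u_n|^p dx → 0 as n → +∞. Then ∫_{ℝ^N} (λ(x) − λ₀(x))·|u_n(x)|^α·|v_n(x)|^β dx → 0 as n → +∞. -/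
open Real MeasureTheory Filter

/-!
By Hölder's inequality the coupling terms `|u_n| ^ α |v_n| ^ β` are bounded in `L¹`, and on each
ball they tend to zero in `L¹` since the factor `‖u_n‖_p ^ α` of the Hölder bound does. The weight
`lam - lam₀` is bounded inside a large ball and small outside it, so both parts of the weighted
integral are small.
-/

section Lintegral

open scoped ENNReal

variable {X ι κ : Type*} [MeasurableSpace X] {μ : Measure X} {l : Filter ι}

lemma lintegral_mul_le_of_le_on {s : Set X} (hs : MeasurableSet s) {w f : X → ℝ≥0∞} {C δ : ℝ≥0∞}
    (hC : C ≠ ∞) (hδ : δ ≠ ∞) (hw : ∀ x ∈ s, w x ≤ C) (hw' : ∀ x ∉ s, w x ≤ δ) :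
    ∫⁻ x, w x * f x ∂μ ≤ C * ∫⁻ x in s, f x ∂μ + δ * ∫⁻ x, f x ∂μ := by
  rw [← lintegral_add_compl _ hs]
  gcongr
  · rw [← lintegral_const_mul' _ _ hC]
    exact setLIntegral_mono' hs fun x hx => mul_le_mul_left (hw x hx) _
  · calc ∫⁻ x in sᶜ, w x * f x ∂μ
        ≤ ∫⁻ x in sᶜ, δ * f x ∂μ :=
          setLIntegral_mono' hs.compl fun x hx => mul_le_mul_left (hw' x hx) _
      _ ≤ ∫⁻ x, δ * f x ∂μ := setLIntegral_le_lintegral _ _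
      _ = δ * ∫⁻ x, f x ∂μ := lintegral_const_mul' _ _ hδ

lemma tendsto_lintegral_mul_zero_of_hasBasis_compl {𝓕 : Filter X} {P : κ → Prop} {s : κ → Set X}
    (h𝓕 : 𝓕.HasBasis P fun k => (s k)ᶜ) (hs : ∀ k, P k → MeasurableSet (s k))
    {w : X → ℝ≥0∞} {C : ℝ≥0∞} (hC : C ≠ ∞) (hwC : ∀ x, w x ≤ C) (hw : Tendsto w 𝓕 (nhds 0))
    {f : ι → X → ℝ≥0∞} {M : ℝ≥0∞} (hM : M ≠ ∞) (hfM : ∀ i, ∫⁻ x, f i x ∂μ ≤ M)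
    (hf : ∀ k, P k → Tendsto (fun i => ∫⁻ x in s k, f i x ∂μ) l (nhds 0)) :
    Tendsto (fun i => ∫⁻ x, w x * f i x ∂μ) l (nhds 0) := by
  refine ENNReal.tendsto_nhds_zero.2 fun ε hε => ?_
  have hε₂ : ε / 2 ≠ 0 := (ENNReal.half_pos hε.ne').ne'
  obtain ⟨δ, hδ, hδM⟩ := ENNReal.exists_nnreal_pos_mul_lt hM hε₂
  obtain ⟨k, hk, hwδ⟩ := h𝓕.eventually_iff.1 <|
    ENNReal.tendsto_nhds_zero.1 hw δ (ENNReal.coe_pos.2 hδ)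
  have hCf : Tendsto (fun i => C * ∫⁻ x in s k, f i x ∂μ) l (nhds 0) := by
    simpa only [mul_zero] using ENNReal.Tendsto.const_mul (hf k hk) (Or.inr hC)
  filter_upwards [ENNReal.tendsto_nhds_zero.1 hCf (ε / 2) hε₂.bot_lt] with i hi
  calc ∫⁻ x, w x * f i x ∂μ
      ≤ C * ∫⁻ x in s k, f i x ∂μ + δ * ∫⁻ x, f i x ∂μ :=
        lintegral_mul_le_of_le_on (hs k hk) hC ENNReal.coe_ne_top (fun x _ => hwC x)
          fun x hx => hwδ hx
    _ ≤ ε / 2 + ε / 2 := by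
        gcongr
        exact (mul_le_mul_right (hfM i) _).trans hδM.le
    _ = ε := ENNReal.add_halves ε

lemma lintegral_rpow_mul_rpow_le {f g : X → ℝ≥0∞} (hf : AEMeasurable f μ) (hg : AEMeasurable g μ)
    {a b : ℝ} (ha : 0 ≤ a) (hb : 0 ≤ b) (hab : a + b = 1) {M K : ℝ≥0∞}
    (hfM : ∫⁻ x, f x ∂μ ≤ M) (hgK : ∫⁻ x, g x ∂μ ≤ K) :
    ∫⁻ x, f x ^ a * g x ^ b ∂μ ≤ M ^ a * K ^ b :=
  (ENNReal.lintegral_mul_norm_pow_le hf hg ha hb hab).trans (by gcongr)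

lemma tendsto_lintegral_rpow_mul_rpow_zero {f g : ι → X → ℝ≥0∞}
    (hf : ∀ i, AEMeasurable (f i) μ) (hg : ∀ i, AEMeasurable (g i) μ)
    {a b : ℝ} (ha : 0 < a) (hb : 0 ≤ b) (hab : a + b = 1) {K : ℝ≥0∞} (hK : K ≠ ∞)
    (hgK : ∀ i, ∫⁻ x, g i x ∂μ ≤ K) (hf₀ : Tendsto (fun i => ∫⁻ x, f i x ∂μ) l (nhds 0)) :
    Tendsto (fun i => ∫⁻ x, f i x ^ a * g i x ^ b ∂μ) l (nhds 0) := by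
  have hbound : Tendsto (fun i => (∫⁻ x, f i x ∂μ) ^ a * K ^ b) l (nhds 0) := by
    simpa only [ENNReal.zero_rpow_of_pos ha, zero_mul] using
      ENNReal.Tendsto.mul_const (hf₀.ennrpow_const a) (Or.inr (ENNReal.rpow_ne_top_of_nonneg hb hK))
  exact tendsto_of_tendsto_of_tendsto_of_le_of_le tendsto_const_nhds hbound (fun _ => zero_le)
    fun i => lintegral_rpow_mul_rpow_le (hf i) (hg i) ha.le hb hab le_rfl (hgK i)

lemma tendsto_lintegral_mul_rpow_mul_rpow_zero {𝓕 : Filter X} {P : κ → Prop} {s : κ → Set X}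
    (h𝓕 : 𝓕.HasBasis P fun k => (s k)ᶜ) (hs : ∀ k, P k → MeasurableSet (s k))
    {w : X → ℝ≥0∞} {C : ℝ≥0∞} (hC : C ≠ ∞) (hwC : ∀ x, w x ≤ C) (hw : Tendsto w 𝓕 (nhds 0))
    {f g : ι → X → ℝ≥0∞} (hf : ∀ i, AEMeasurable (f i) μ) (hg : ∀ i, AEMeasurable (g i) μ)
    {a b : ℝ} (ha : 0 < a) (hb : 0 ≤ b) (hab : a + b = 1) {M K : ℝ≥0∞} (hM : M ≠ ∞) (hK : K ≠ ∞)
    (hfM : ∀ i, ∫⁻ x, f i x ∂μ ≤ M) (hgK : ∀ i, ∫⁻ x, g i x ∂μ ≤ K)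
    (hloc : ∀ k, P k → Tendsto (fun i => ∫⁻ x in s k, f i x ∂μ) l (nhds 0)) :
    Tendsto (fun i => ∫⁻ x, w x * (f i x ^ a * g i x ^ b) ∂μ) l (nhds 0) :=
  tendsto_lintegral_mul_zero_of_hasBasis_compl h𝓕 hs hC hwC hw
    (ENNReal.mul_ne_top (ENNReal.rpow_ne_top_of_nonneg ha.le hM)
      (ENNReal.rpow_ne_top_of_nonneg hb hK))
    (fun i => lintegral_rpow_mul_rpow_le (hf i) (hg i) ha.le hb hab (hfM i) (hgK i))
    fun k hk => tendsto_lintegral_rpow_mul_rpow_zero (fun i => (hf i).restrict)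
      (fun i => (hg i).restrict) ha hb hab hK
      (fun i => (setLIntegral_le_lintegral _ _).trans (hgK i)) (hloc k hk)

end Lintegral

section Integral

variable {X ι κ : Type*} [MeasurableSpace X] {μ : Measure X} {l : Filter ι} {a b : ℝ}

lemma integrable_rpow_mul_rpow {f g : X → ℝ} (hf₀ : 0 ≤ f) (hg₀ : 0 ≤ g) (hf : Integrable f μ)
    (hg : Integrable g μ) (ha : 0 ≤ a) (hb : 0 ≤ b) (hab : a + b = 1) :
    Integrable (fun x => f x ^ a * g x ^ b) μ := by
  refine ((hf.const_mul a).add (hg.const_mul b)).mono'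
    ((hf.aemeasurable.pow_const a).mul (hg.aemeasurable.pow_const b)).aestronglyMeasurable
    (.of_forall fun x => ?_)
  rw [norm_of_nonneg (mul_nonneg (rpow_nonneg (hf₀ x) _) (rpow_nonneg (hg₀ x) _))]
  exact geom_mean_le_arith_mean2_weighted ha hb (hf₀ x) (hg₀ x) hab

lemma lintegral_enorm_eq_ofReal_integral {f : X → ℝ} (hf₀ : 0 ≤ f) (hf : Integrable f μ) :
    ∫⁻ x, ‖f x‖ₑ ∂μ = ENNReal.ofReal (∫ x, f x ∂μ) := by
  rw [lintegral_enorm_of_nonneg hf₀, ofReal_integral_eq_lintegral_ofReal hf (.of_forall hf₀)]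

lemma tendsto_integral_mul_rpow_mul_rpow_zero {𝓕 : Filter X} {P : κ → Prop} {s : κ → Set X}
    (h𝓕 : 𝓕.HasBasis P fun k => (s k)ᶜ) (hs : ∀ k, P k → MeasurableSet (s k))
    {w : X → ℝ} {C : ℝ} (hwC : ∀ x, |w x| ≤ C) (hw : Tendsto w 𝓕 (nhds 0))
    {f g : ι → X → ℝ} (hf₀ : ∀ i, 0 ≤ f i) (hg₀ : ∀ i, 0 ≤ g i)
    (hf : ∀ i, Integrable (f i) μ) (hg : ∀ i, Integrable (g i) μ)
    (ha : 0 < a) (hb : 0 ≤ b) (hab : a + b = 1) {M K : ℝ}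
    (hfM : ∀ i, ∫ x, f i x ∂μ ≤ M) (hgK : ∀ i, ∫ x, g i x ∂μ ≤ K)
    (hloc : ∀ k, P k → Tendsto (fun i => ∫ x in s k, f i x ∂μ) l (nhds 0)) :
    Tendsto (fun i => ∫ x, w x * (f i x ^ a * g i x ^ b) ∂μ) l (nhds 0) := by
  have hlintegral {h : X → ℝ} (h₀ : 0 ≤ h) (hh : Integrable h μ) {L : ℝ} (hL : ∫ x, h x ∂μ ≤ L) :
      ∫⁻ x, ‖h x‖ₑ ∂μ ≤ ENNReal.ofReal L :=
    (lintegral_enorm_eq_ofReal_integral h₀ hh).trans_le (ENNReal.ofReal_le_ofReal hL)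
  have hlocLintegral (k) (hk : P k) :
      Tendsto (fun i => ∫⁻ x in s k, ‖f i x‖ₑ ∂μ) l (nhds 0) := by
    rw [← ENNReal.ofReal_zero]
    exact (ENNReal.tendsto_ofReal (hloc k hk)).congr fun i =>
      (lintegral_enorm_eq_ofReal_integral (hf₀ i) (hf i).integrableOn).symm
  have hweighted : Tendsto (fun i => ∫⁻ x, ‖w x‖ₑ * (‖f i x‖ₑ ^ a * ‖g i x‖ₑ ^ b) ∂μ) l (nhds 0) :=
    tendsto_lintegral_mul_rpow_mul_rpow_zero h𝓕 hs ENNReal.ofReal_ne_top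
      (fun x => (Real.enorm_eq_ofReal_abs _).trans_le (ENNReal.ofReal_le_ofReal (hwC x)))
      (tendsto_zero_iff_enorm_tendsto_zero.1 hw) (fun i => (hf i).aemeasurable.enorm)
      (fun i => (hg i).aemeasurable.enorm) ha hb hab ENNReal.ofReal_ne_top ENNReal.ofReal_ne_top
      (fun i => hlintegral (hf₀ i) (hf i) (hfM i)) (fun i => hlintegral (hg₀ i) (hg i) (hgK i))
      hlocLintegral
  refine tendsto_zero_iff_enorm_tendsto_zero.2 <| tendsto_of_tendsto_of_tendsto_of_le_of_le
    tendsto_const_nhds hweighted (fun _ => zero_le) fun i =>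
      (enorm_integral_le_lintegral_enorm _).trans_eq (lintegral_congr fun x => ?_)
  rw [enorm_mul, enorm_mul, Real.enorm_rpow_of_nonneg (hf₀ i x) ha.le,
    Real.enorm_rpow_of_nonneg (hg₀ i x) hb]

end Integral

theorem asymptotically_periodic_coupling_term_vanishes_general
    {X ι E F : Type*} [PseudoMetricSpace X] [MeasurableSpace X] [OpensMeasurableSpace X]
    [SeminormedAddCommGroup E] [SeminormedAddCommGroup F] {μ : Measure X} {l : Filter ι}
    {p q α β : ℝ} (hp : 0 < p) (hq : 0 < q) (hα : 0 < α) (hβ : 0 ≤ β) (hsum : α / p + β / q = 1)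
    {w : X → ℝ} (hwmeas : AEStronglyMeasurable w μ) {C : ℝ} (hwC : ∀ x, |w x| ≤ C)
    (hw : Tendsto w (Bornology.cobounded X) (nhds 0)) {u : ι → X → E} {v : ι → X → F}
    (hu : ∀ i, Integrable (fun x => ‖u i x‖ ^ p) μ) (hv : ∀ i, Integrable (fun x => ‖v i x‖ ^ q) μ)
    {M K : ℝ} (huM : ∀ i, ∫ x, ‖u i x‖ ^ p ∂μ ≤ M) (hvK : ∀ i, ∫ x, ‖v i x‖ ^ q ∂μ ≤ K) (x₀ : X)
    (hloc : ∀ R : ℝ, 0 < R →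
      Tendsto (fun i => ∫ x in Metric.ball x₀ R, ‖u i x‖ ^ p ∂μ) l (nhds 0)) :
    (∀ i, Integrable (fun x => w x * ‖u i x‖ ^ α * ‖v i x‖ ^ β) μ) ∧
      Tendsto (fun i => ∫ x, w x * ‖u i x‖ ^ α * ‖v i x‖ ^ β ∂μ) l (nhds 0) := by
  have hαp : 0 < α / p := div_pos hα hp
  have hβq : 0 ≤ β / q := div_nonneg hβ hq.le
  have hupow₀ (i) : 0 ≤ fun x => ‖u i x‖ ^ p := fun x => rpow_nonneg (norm_nonneg _) _
  have hvpow₀ (i) : 0 ≤ fun x => ‖v i x‖ ^ q := fun x => rpow_nonneg (norm_nonneg _) _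
  have hfactor (i x) : w x * ‖u i x‖ ^ α * ‖v i x‖ ^ β =
      w x * ((‖u i x‖ ^ p) ^ (α / p) * (‖v i x‖ ^ q) ^ (β / q)) := by
    rw [← rpow_mul (norm_nonneg _), ← rpow_mul (norm_nonneg _), mul_div_cancel₀ _ hp.ne',
      mul_div_cancel₀ _ hq.ne', mul_assoc]
  simp_rw [hfactor]
  refine ⟨fun i => (integrable_rpow_mul_rpow (hupow₀ i) (hvpow₀ i) (hu i) (hv i) hαp.le hβq
    hsum).bdd_mul hwmeas (.of_forall hwC), ?_⟩
  have hballs : (Bornology.cobounded X).HasBasis (0 < ·) fun R : ℝ => (Metric.ball x₀ R)ᶜ :=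
    (Metric.hasBasis_cobounded_compl_ball x₀).to_hasBasis
      (fun R _ => ⟨max R 1, by positivity, by gcongr; exact le_max_left R 1⟩)
      fun R _ => ⟨R, trivial, subset_rfl⟩
  exact tendsto_integral_mul_rpow_mul_rpow_zero hballs (fun R _ => Metric.isOpen_ball.measurableSet)
    hwC hw hupow₀ hvpow₀ hu hv hαp hβq hsum huM hvK hloc

theorem asymptotically_periodic_coupling_term_vanishes
    {N : ℕ} (hN : 1 ≤ N) (p q α β : ℝ)
    (hp : 1 < p) (hq : 1 < q) (hα : 0 < α) (hβ : 0 < β)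
    (hsum : α / p + β / q = 1)
    (lam lam₀ : EuclideanSpace ℝ (Fin N) → ℝ)
    (hlmeas : Measurable lam) (hl₀meas : Measurable lam₀)
    (C : ℝ) (hlbd : ∀ x, |lam x| ≤ C) (hl₀bd : ∀ x, |lam₀ x| ≤ C)
    (hdecay : ∀ ε : ℝ, 0 < ε → ∃ R : ℝ, ∀ x : EuclideanSpace ℝ (Fin N),
      R ≤ ‖x‖ → |lam x - lam₀ x| < ε)
    (u v : ℕ → EuclideanSpace ℝ (Fin N) → ℝ)
    (humeas : ∀ n, Measurable (u n)) (hvmeas : ∀ n, Measurable (v n))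
    (huint : ∀ n, Integrable (fun x => |u n x| ^ p))
    (hvint : ∀ n, Integrable (fun x => |v n x| ^ q))
    (M : ℝ) (hubdd : ∀ n, (∫ x, |u n x| ^ p) ≤ M) (hvbdd : ∀ n, (∫ x, |v n x| ^ q) ≤ M)
    (hloc : ∀ R : ℝ, 0 < R →
      Tendsto (fun n => ∫ x in Metric.ball (0 : EuclideanSpace ℝ (Fin N)) R, |u n x| ^ p)
        atTop (nhds 0)) :
    Tendsto (fun n => ∫ x, (lam x - lam₀ x) * |u n x| ^ α * |v n x| ^ β)
      atTop (nhds 0) := by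
  have hdecay_cobounded : Tendsto (fun x => lam x - lam₀ x) (Bornology.cobounded _) (nhds 0) := by
    simpa [hasBasis_cobounded_norm.tendsto_iff Metric.nhds_basis_ball] using hdecay
  exact (asymptotically_periodic_coupling_term_vanishes_general (u := u) (v := v)
    (one_pos.trans hp) (one_pos.trans hq) hα hβ.le hsum (hlmeas.sub hl₀meas).aestronglyMeasurable
    (fun x => (abs_sub _ _).trans (add_le_add (hlbd x) (hl₀bd x))) hdecay_cobounded huint hvint
    hubdd hvbdd 0 hloc).2
end
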